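/- Let $1 < p < N$, $p^* = Np/(N-p)$. Suppose $(u_k)$ is a bounded sequence in $\dot H^{1,p}(\mathbb{R}^N)$ and $a_k := \sup_{y \in \mathbb{Z}^N} \int_{(0,1)^N + y} |u_k|^p\,dx \to 0$. Let $\chi \in C_c^\infty((1/2,4),[0,3])$ with $|\chi'| \le 2$. Then $\int_{\mathbb{R}^N} \chi(|u_k|)^{p^*}\,dx \to 0$. -/

import Mathlib

open MeasureTheory Set Filter Topology
open scoped ENNReal

namespace UnitCubeSobolev

/-- The open unit cube `(0,1)^N + y`. -/
def unitCube {N : ℕ} (y : Fin N → ℤ) : Set (EuclideanSpace ℝ (Fin N)) :=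
  {x | ∀ i, (y i : ℝ) < x i ∧ x i < (y i : ℝ) + 1}

/-- The lattice point `y`, as an element of Euclidean space. -/
def latticePoint {N : ℕ} (y : Fin N → ℤ) : EuclideanSpace ℝ (Fin N) :=
  WithLp.toLp 2 fun i => (y i : ℝ)

lemma measurableSet_unitCube {N : ℕ} (y : Fin N → ℤ) : MeasurableSet (unitCube y) := by
  have : unitCube y = ⋂ i, {x : EuclideanSpace ℝ (Fin N) | (y i : ℝ) < x i} ∩
      {x | x i < (y i : ℝ) + 1} := by
    ext x
    simp [unitCube]
  rw [this]
  refine MeasurableSet.iInter fun i => ?_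
  exact (measurableSet_lt (by fun_prop) (by fun_prop)).inter
    (measurableSet_lt (by fun_prop) (by fun_prop))

lemma ae_mem_iUnion_unitCube (N : ℕ) :
    ∀ᵐ x : EuclideanSpace ℝ (Fin N), x ∈ ⋃ y, unitCube y := by
  have hcoord (i : Fin N) :
      ∀ᵐ x : EuclideanSpace ℝ (Fin N), x i ∉ range ((↑) : ℤ → ℝ) := by
    have hq := (Measure.quasiMeasurePreserving_eval (fun _ : Fin N => (volume : Measure ℝ)) i).comp
      (PiLp.volume_preserving_ofLp (Fin N)).quasiMeasurePreserving
    have h0 : ∀ᵐ t : ℝ, t ∉ range ((↑) : ℤ → ℝ) :=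
      (countable_range _).ae_notMem volume
    exact hq.ae h0
  filter_upwards [ae_all_iff.2 hcoord] with x hx
  refine mem_iUnion.2 ⟨fun i => ⌊x i⌋, fun i => ⟨?_, Int.lt_floor_add_one _⟩⟩
  exact lt_of_le_of_ne (Int.floor_le _) fun h => hx i ⟨_, h⟩

lemma lintegral_le_tsum_unitCube {N : ℕ} (f : EuclideanSpace ℝ (Fin N) → ℝ≥0∞) :
    ∫⁻ x, f x ≤ ∑' y, ∫⁻ x in unitCube y, f x := by
  have h : (volume : Measure (EuclideanSpace ℝ (Fin N))).restrict (⋃ y, unitCube y) = volume := by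
    rw [Measure.restrict_eq_self_of_ae_mem (ae_mem_iUnion_unitCube N)]
  calc ∫⁻ x, f x = ∫⁻ x in ⋃ y, unitCube y, f x := by rw [h]
    _ ≤ _ := lintegral_iUnion_le _ _

lemma unitCube_subset_closedBall {N : ℕ} (y : Fin N → ℤ) :
    unitCube y ⊆ Metric.closedBall (latticePoint y) (N + 1) := by
  intro x hx
  rw [mem_closedBall_iff_norm, EuclideanSpace.norm_eq]
  refine Real.sqrt_le_iff.2 ⟨by positivity, ?_⟩
  have h : ∑ i, ‖(x - latticePoint y) i‖ ^ 2 ≤ ∑ _i : Fin N, (1 : ℝ) := by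
    refine Finset.sum_le_sum fun i _ => ?_
    have h1 := hx i
    have h2 : (x - latticePoint y) i = x i - y i := rfl
    rw [h2, Real.norm_eq_abs, sq_abs]
    nlinarith
  have h3 : (∑ _i : Fin N, (1 : ℝ)) = N := by simp
  nlinarith [Nat.cast_nonneg (α := ℝ) N]

/-- Balls of a fixed radius around the lattice points have bounded overlap. -/
lemma exists_tsum_lattice_ball_le (N : ℕ) (R : ℝ) :
    ∃ K : ℕ, ∀ x : EuclideanSpace ℝ (Fin N),
      ∑' y : Fin N → ℤ, (Metric.ball (latticePoint y) R).indicator (fun _ => (1 : ℝ≥0∞)) x ≤ K := by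
  refine ⟨(2 * ⌈R⌉.toNat + 1) ^ N, fun x => ?_⟩
  set s : Finset (Fin N → ℤ) :=
    Fintype.piFinset fun i => Finset.Icc (⌊x i⌋ + 1 - ⌈R⌉) (⌊x i⌋ + ⌈R⌉)
  have hs : ∀ y ∉ s, (Metric.ball (latticePoint y) R).indicator (fun _ => (1 : ℝ≥0∞)) x = 0 := by
    intro y hy
    refine indicator_of_notMem (fun hx => hy ?_) _
    refine Fintype.mem_piFinset.2 fun i => ?_
    have h1 : |x i - y i| < R := by
      have h2 : (x - latticePoint y) i = x i - y i := rfl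
      rw [← h2, ← Real.norm_eq_abs]
      exact (PiLp.norm_apply_le _ i).trans_lt (mem_ball_iff_norm.1 hx)
    rw [abs_lt] at h1
    have h3 := Int.le_ceil R
    have h4 := Int.floor_le (x i)
    have h5 := Int.lt_floor_add_one (x i)
    rw [Finset.mem_Icc]
    constructor
    · have : ((⌊x i⌋ - ⌈R⌉ : ℤ) : ℝ) < (y i : ℝ) := by push_cast; linarith
      have := Int.cast_lt.1 this
      omega
    · have : (y i : ℝ) < ((⌊x i⌋ + 1 + ⌈R⌉ : ℤ) : ℝ) := by push_cast; linarith
      have := Int.cast_lt.1 this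
      omega
  rw [tsum_eq_sum hs]
  calc ∑ y ∈ s, (Metric.ball (latticePoint y) R).indicator (fun _ => (1 : ℝ≥0∞)) x
      ≤ ∑ _y ∈ s, (1 : ℝ≥0∞) := Finset.sum_le_sum fun y _ => indicator_le_self' (by simp) x
    _ = (s.card : ℝ≥0∞) := by simp
    _ ≤ _ := by
      rw [Nat.cast_le, Fintype.card_piFinset]
      refine (Finset.prod_le_pow_card _ _ (2 * ⌈R⌉.toNat + 1) fun i _ => ?_).trans (by simp)
      rw [Int.card_Icc]
      omega

lemma exists_tsum_setLIntegral_lattice_ball_le (N : ℕ) (R : ℝ) :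
    ∃ K : ℕ, ∀ g : EuclideanSpace ℝ (Fin N) → ℝ≥0∞, Measurable g →
      ∑' y : Fin N → ℤ, ∫⁻ x in Metric.ball (latticePoint y) R, g x ≤ K * ∫⁻ x, g x := by
  obtain ⟨K, hK⟩ := exists_tsum_lattice_ball_le N R
  refine ⟨K, fun g hg => ?_⟩
  calc ∑' y : Fin N → ℤ, ∫⁻ x in Metric.ball (latticePoint y) R, g x
      = ∑' y : Fin N → ℤ, ∫⁻ x, (Metric.ball (latticePoint y) R).indicator g x := by
        simp_rw [lintegral_indicator Metric.isOpen_ball.measurableSet]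
    _ = ∫⁻ x, ∑' y : Fin N → ℤ, (Metric.ball (latticePoint y) R).indicator g x :=
        (lintegral_tsum fun y =>
          (hg.indicator Metric.isOpen_ball.measurableSet).aemeasurable).symm
    _ ≤ ∫⁻ x, K * g x := by
        refine lintegral_mono fun x => ?_
        calc ∑' y : Fin N → ℤ, (Metric.ball (latticePoint y) R).indicator g x
            = ∑' y : Fin N → ℤ,
                (Metric.ball (latticePoint y) R).indicator (fun _ => (1 : ℝ≥0∞)) x * g x := by
              refine tsum_congr fun y => ?_
              by_cases hx : x ∈ Metric.ball (latticePoint y) R <;> simp [hx]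
          _ ≤ _ := by
              rw [ENNReal.tsum_mul_right]
              gcongr
              exact hK x
    _ = K * ∫⁻ x, g x := lintegral_const_mul _ hg

/-- The Gagliardo–Nirenberg–Sobolev inequality, in terms of integrals of powers. -/
lemma exists_lintegral_rpow_le_lintegral_fderiv {N : ℕ} {p q : ℝ} (hp : 1 ≤ p) (hN : 0 < N)
    (hq : 0 < q) (hpq : q⁻¹ = p⁻¹ - (N : ℝ)⁻¹) :
    ∃ C : ℝ≥0∞, C ≠ ∞ ∧ ∀ f : EuclideanSpace ℝ (Fin N) → ℝ, ContDiff ℝ 1 f →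
      HasCompactSupport f →
      (∫⁻ x, ‖f x‖ₑ ^ q) ^ (p / q) ≤ C * ∫⁻ x, ‖fderiv ℝ f x‖ₑ ^ p := by
  have hp0 : 0 < p := by linarith
  lift p to NNReal using hp0.le
  lift q to NNReal using hq.le
  refine ⟨(eLpNormLESNormFDerivOfEqInnerConst
    (volume : Measure (EuclideanSpace ℝ (Fin N))) p : ℝ≥0∞) ^ (p : ℝ),
    ENNReal.rpow_ne_top_of_nonneg hp0.le ENNReal.coe_ne_top, fun f hf hcf => ?_⟩
  have key := eLpNorm_le_eLpNorm_fderiv_of_eq_inner volume hf hcf (p := p) (p' := q)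
    (by exact_mod_cast hp) (by simpa using hN) (by simpa using hpq)
  have hp0' : p ≠ 0 := by rintro rfl; simp at hp0
  have hq0' : q ≠ 0 := by rintro rfl; simp at hq
  rw [← eLpNorm_nnreal_pow_eq_lintegral hp0', ← eLpNorm_nnreal_pow_eq_lintegral hq0',
    ← ENNReal.rpow_mul, mul_div_cancel₀ _ hq.ne', ← ENNReal.mul_rpow_of_nonneg _ _ hp0.le]
  exact ENNReal.rpow_le_rpow key hp0.le

/-- The Sobolev inequality on unit cubes, with an enlarged domain on the right-hand side. -/
lemma exists_setLIntegral_unitCube_rpow_le {N : ℕ} {p q : ℝ} (hp : 1 ≤ p) (hN : 0 < N)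
    (hq : 0 < q) (hpq : q⁻¹ = p⁻¹ - (N : ℝ)⁻¹) :
    ∃ C : ℝ≥0∞, C ≠ ∞ ∧ ∀ f : EuclideanSpace ℝ (Fin N) → ℝ, ContDiff ℝ 1 f →
      HasCompactSupport f → ∀ y : Fin N → ℤ,
      (∫⁻ x in unitCube y, ‖f x‖ₑ ^ q) ^ (p / q) ≤
        C * ∫⁻ x in Metric.ball (latticePoint y) (N + 2), (‖fderiv ℝ f x‖ₑ ^ p + ‖f x‖ₑ ^ p) := by
  have hp0 : 0 < p := by linarith
  obtain ⟨C, hC, hsob⟩ := exists_lintegral_rpow_le_lintegral_fderiv hp hN hq hpq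
  let φ : ContDiffBump (0 : EuclideanSpace ℝ (Fin N)) :=
    ⟨N + 1, N + 2, by positivity, by linarith⟩
  have hφ : ContDiff ℝ 1 φ := φ.contDiff
  obtain ⟨L₀, hL₀⟩ := (φ.hasCompactSupport.fderiv ℝ).exists_bound_of_continuous
    (hφ.continuous_fderiv one_ne_zero)
  set L : ℝ≥0∞ := ENNReal.ofReal L₀
  have hL (x) : ‖fderiv ℝ φ x‖ₑ ≤ L := by
    rw [← ofReal_norm]
    exact ENNReal.ofReal_le_ofReal (hL₀ x)
  refine ⟨C * (2 ^ (p - 1) * (1 + L ^ p)), ENNReal.mul_ne_top hC (ENNReal.mul_ne_top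
    (ENNReal.rpow_ne_top_of_nonneg (by linarith) (by simp)) (ENNReal.add_ne_top.2
      ⟨by simp, ENNReal.rpow_ne_top_of_nonneg hp0.le ENNReal.ofReal_ne_top⟩)),
    fun f hf hcf y => ?_⟩
  set c := latticePoint y
  have hψ : ContDiff ℝ 1 (fun x => φ (x - c)) := hφ.comp (contDiff_id.sub contDiff_const)
  have hderiv (x) : fderiv ℝ (fun x => φ (x - c)) x = fderiv ℝ φ (x - c) :=
    fderiv_comp_sub c
  have hball (x) (hx : x ∉ Metric.ball c (N + 2)) : ((N : ℝ) + 2) ≤ dist (x - c) 0 := by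
    simpa [dist_eq_norm] using hx
  set g : EuclideanSpace ℝ (Fin N) → ℝ := fun x => φ (x - c) * f x
  have hg : ContDiff ℝ 1 g := hψ.mul hf
  have hcg : HasCompactSupport g := hcf.mul_left
  have hgderiv (x) : ‖fderiv ℝ g x‖ₑ ^ p ≤ (Metric.ball c (N + 2)).indicator
      (fun x => (2 ^ (p - 1) * (1 + L ^ p)) * (‖fderiv ℝ f x‖ₑ ^ p + ‖f x‖ₑ ^ p)) x := by
    have hfd : fderiv ℝ g x = φ (x - c) • fderiv ℝ f x + f x • fderiv ℝ φ (x - c) := by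
      rw [← hderiv]
      exact fderiv_fun_mul (hψ.differentiable one_ne_zero x) (hf.differentiable one_ne_zero x)
    by_cases hx : x ∈ Metric.ball c (N + 2)
    · rw [indicator_of_mem hx]
      have h1 : ‖φ (x - c)‖ₑ ≤ 1 := by
        rw [Real.enorm_eq_ofReal φ.nonneg, ENNReal.ofReal_le_one]
        exact φ.le_one
      have h2 : ‖fderiv ℝ g x‖ₑ ≤ ‖fderiv ℝ f x‖ₑ + L * ‖f x‖ₑ := by
        rw [hfd]
        refine (enorm_add_le (φ (x - c) • fderiv ℝ f x) (f x • fderiv ℝ φ (x - c))).trans ?_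
        rw [enorm_smul, enorm_smul, mul_comm L]
        gcongr
        · exact mul_le_of_le_one_left' h1
        · exact hL _
      calc ‖fderiv ℝ g x‖ₑ ^ p ≤ (‖fderiv ℝ f x‖ₑ + L * ‖f x‖ₑ) ^ p := by gcongr
        _ ≤ 2 ^ (p - 1) * (‖fderiv ℝ f x‖ₑ ^ p + (L * ‖f x‖ₑ) ^ p) :=
            ENNReal.rpow_add_le_mul_rpow_add_rpow _ _ hp
        _ ≤ _ := by
            rw [ENNReal.mul_rpow_of_nonneg _ _ hp0.le, mul_assoc]
            gcongr
            rw [mul_add]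
            gcongr
            · exact le_mul_of_one_le_left' le_self_add
            · exact le_add_self
    · rw [indicator_of_notMem hx]
      have h1 : φ (x - c) = 0 := φ.zero_of_le_dist (hball x hx)
      have h2 : fderiv ℝ φ (x - c) = 0 := by
        refine IsLocalMin.fderiv_eq_zero (Filter.Eventually.of_forall fun z => ?_)
        rw [h1]
        exact φ.nonneg
      have h3 : fderiv ℝ g x = 0 := by simp [hfd, h1, h2]
      rw [h3, ← ofReal_norm, norm_zero, ENNReal.ofReal_zero, ENNReal.zero_rpow_of_pos hp0]
  calc (∫⁻ x in unitCube y, ‖f x‖ₑ ^ q) ^ (p / q)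
      ≤ (∫⁻ x, ‖g x‖ₑ ^ q) ^ (p / q) := by
        gcongr ?_ ^ _
        calc ∫⁻ x in unitCube y, ‖f x‖ₑ ^ q = ∫⁻ x in unitCube y, ‖g x‖ₑ ^ q := by
              refine setLIntegral_congr_fun (measurableSet_unitCube y) fun x hx => ?_
              have : φ (x - c) = 1 := φ.one_of_mem_closedBall (by
                simpa [dist_eq_norm] using unitCube_subset_closedBall y hx)
              simp [g, this]
          _ ≤ _ := setLIntegral_le_lintegral _ _
    _ ≤ C * ∫⁻ x, ‖fderiv ℝ g x‖ₑ ^ p := hsob g hg hcg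
    _ ≤ C * ∫⁻ x in Metric.ball c (N + 2),
          (2 ^ (p - 1) * (1 + L ^ p)) * (‖fderiv ℝ f x‖ₑ ^ p + ‖f x‖ₑ ^ p) := by
        rw [← lintegral_indicator Metric.isOpen_ball.measurableSet]
        gcongr with x
        exact hgderiv x
    _ = _ := by
        rw [lintegral_const_mul, ← mul_assoc]
        have := hf.continuous_fderiv one_ne_zero
        have := hf.continuous
        fun_prop

/-- If the `L^q` mass on every unit cube is at most `a`, then so is the total one, up to a positive
power of `a` and the `W^{1,p}` norm. -/
lemma exists_lintegral_rpow_le_of_unitCube_le {N : ℕ} {p q : ℝ} (hp : 1 ≤ p) (hN : 0 < N)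
    (hq : p ≤ q) (hpq : q⁻¹ = p⁻¹ - (N : ℝ)⁻¹) :
    ∃ C : ℝ≥0∞, C ≠ ∞ ∧ ∀ f : EuclideanSpace ℝ (Fin N) → ℝ, ContDiff ℝ 1 f →
      HasCompactSupport f → ∀ a : ℝ≥0∞, (∀ y, ∫⁻ x in unitCube y, ‖f x‖ₑ ^ q ≤ a) →
      ∫⁻ x, ‖f x‖ₑ ^ q ≤
        C * a ^ (1 - p / q) * ∫⁻ x, (‖fderiv ℝ f x‖ₑ ^ p + ‖f x‖ₑ ^ p) := by
  have hq0 : 0 < q := by linarith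
  have hθ : p / q ≤ 1 := (div_le_one hq0).2 hq
  obtain ⟨C, hC, hcube⟩ := exists_setLIntegral_unitCube_rpow_le hp hN hq0 hpq
  obtain ⟨K, hK⟩ := exists_tsum_setLIntegral_lattice_ball_le N (N + 2)
  refine ⟨C * K, ENNReal.mul_ne_top hC (by simp), fun f hf hcf a ha => ?_⟩
  have hmeas : Measurable fun x => ‖fderiv ℝ f x‖ₑ ^ p + ‖f x‖ₑ ^ p := by
    have := hf.continuous_fderiv one_ne_zero
    have := hf.continuous
    fun_prop
  calc ∫⁻ x, ‖f x‖ₑ ^ q ≤ ∑' y, ∫⁻ x in unitCube y, ‖f x‖ₑ ^ q :=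
        lintegral_le_tsum_unitCube _
    _ ≤ ∑' y : Fin N → ℤ, a ^ (1 - p / q) * (C * ∫⁻ x in Metric.ball (latticePoint y) (N + 2),
          (‖fderiv ℝ f x‖ₑ ^ p + ‖f x‖ₑ ^ p)) := by
        refine ENNReal.tsum_le_tsum fun y => ?_
        have hsplit : ∫⁻ x in unitCube y, ‖f x‖ₑ ^ q =
            (∫⁻ x in unitCube y, ‖f x‖ₑ ^ q) ^ (1 - p / q) *
              (∫⁻ x in unitCube y, ‖f x‖ₑ ^ q) ^ (p / q) := by
          rw [← ENNReal.rpow_add_of_nonneg _ _ (by linarith) (by positivity), sub_add_cancel,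
            ENNReal.rpow_one]
        rw [hsplit]
        exact mul_le_mul' (ENNReal.rpow_le_rpow (ha y) (by linarith)) (hcube f hf hcf y)
    _ = a ^ (1 - p / q) * (C * ∑' y : Fin N → ℤ, ∫⁻ x in Metric.ball (latticePoint y) (N + 2),
          (‖fderiv ℝ f x‖ₑ ^ p + ‖f x‖ₑ ^ p)) := by
        rw [ENNReal.tsum_mul_left, ENNReal.tsum_mul_left]
    _ ≤ a ^ (1 - p / q) * (C * (K * ∫⁻ x, (‖fderiv ℝ f x‖ₑ ^ p + ‖f x‖ₑ ^ p))) := by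
        gcongr
        exact hK _ hmeas
    _ = _ := by ring

section Truncation

variable {χ : ℝ → ℝ}

lemma comp_abs_eq_add (hsupp : ∀ t, χ t ≠ 0 → t ∈ Ioo (1/2 : ℝ) 4) (t : ℝ) :
    χ |t| = χ t + χ (-t) := by
  have h0 : ∀ s ≤ 0, χ s = 0 := fun s hs => by
    by_contra h
    linarith [(hsupp s h).1]
  rcases le_total 0 t with ht | ht
  · rw [abs_of_nonneg ht, h0 (-t) (by linarith), add_zero]
  · rw [abs_of_nonpos ht, h0 t ht, zero_add]

lemma contDiff_comp_abs (hχ : ContDiff ℝ 1 χ)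
    (hsupp : ∀ t, χ t ≠ 0 → t ∈ Ioo (1/2 : ℝ) 4) : ContDiff ℝ 1 (fun t => χ |t|) := by
  simp_rw [comp_abs_eq_add hsupp]
  exact hχ.add (hχ.comp contDiff_neg)

lemma abs_deriv_comp_abs_le (hχ : ContDiff ℝ 1 χ)
    (hsupp : ∀ t, χ t ≠ 0 → t ∈ Ioo (1/2 : ℝ) 4) (hχ' : ∀ t, |deriv χ t| ≤ 2) (t : ℝ) :
    |deriv (fun t => χ |t|) t| ≤ 4 := by
  simp_rw [comp_abs_eq_add hsupp]
  have hd := hχ.differentiable one_ne_zero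
  have hdn : DifferentiableAt ℝ (fun t => χ (-t)) t :=
    (hd (-t)).comp t differentiable_neg.differentiableAt
  rw [deriv_fun_add (hd t) hdn, deriv_comp_neg]
  have h1 := abs_le.1 (hχ' t)
  have h2 := abs_le.1 (hχ' (-t))
  rw [abs_le]
  constructor <;> linarith

lemma enorm_comp_abs_rpow_le (hsupp : ∀ t, χ t ≠ 0 → t ∈ Ioo (1/2 : ℝ) 4)
    (hbd : ∀ t, χ t ∈ Icc (0 : ℝ) 3) {r s : ℝ} (hr : 0 < r) (hs : 0 < s) (t : ℝ) :
    ‖χ |t|‖ₑ ^ r ≤ 3 ^ r * 2 ^ s * ‖t‖ₑ ^ s := by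
  by_cases h : χ |t| = 0
  · simp [h, hr]
  have h1 : ‖χ |t|‖ₑ ≤ 3 := by
    rw [Real.enorm_eq_ofReal (hbd _).1, ← ENNReal.ofReal_ofNat]
    exact ENNReal.ofReal_le_ofReal (hbd _).2
  have h2 : 1 ≤ 2 * ‖t‖ₑ := by
    rw [Real.enorm_eq_ofReal_abs, ← ENNReal.ofReal_ofNat, ← ENNReal.ofReal_mul (by norm_num),
      ENNReal.one_le_ofReal]
    linarith [(hsupp _ h).1]
  calc ‖χ |t|‖ₑ ^ r ≤ 3 ^ r * 1 := by
        rw [mul_one]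
        gcongr
    _ ≤ 3 ^ r * (2 * ‖t‖ₑ) ^ s := by
        gcongr
        exact ENNReal.one_le_rpow h2 hs
    _ = _ := by rw [ENNReal.mul_rpow_of_nonneg _ _ hs.le, mul_assoc]

lemma enorm_fderiv_comp_le {E : Type*} [NormedAddCommGroup E] [NormedSpace ℝ E] {w : ℝ → ℝ}
    {u : E → ℝ} (hw : Differentiable ℝ w) (hu : Differentiable ℝ u)
    (hw' : ∀ t, |deriv w t| ≤ 4) (x : E) :
    ‖fderiv ℝ (fun x => w (u x)) x‖ₑ ≤ 4 * ‖fderiv ℝ u x‖ₑ := by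
  have h : fderiv ℝ (fun x => w (u x)) x = deriv w (u x) • fderiv ℝ u x :=
    ((hw (u x)).hasDerivAt.comp_hasFDerivAt x (hu x).hasFDerivAt).fderiv
  rw [h, enorm_smul]
  gcongr
  rw [Real.enorm_eq_ofReal_abs, ← ENNReal.ofReal_ofNat]
  exact ENNReal.ofReal_le_ofReal (hw' _)

end Truncation

lemma enorm_rpow_eq_ofReal {F : Type*} [NormedAddCommGroup F] {p : ℝ} (hp : 0 ≤ p) (z : F) :
    ‖z‖ₑ ^ p = ENNReal.ofReal (‖z‖ ^ p) := by
  rw [← ofReal_norm, ENNReal.ofReal_rpow_of_nonneg (norm_nonneg z) hp]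

lemma integrable_norm_rpow {E F : Type*} [NormedAddCommGroup F] [TopologicalSpace E]
    [MeasurableSpace E] [OpensMeasurableSpace E] {μ : Measure E}
    [IsFiniteMeasureOnCompacts μ] {f : E → F}
    (hf : Continuous f) (hcf : HasCompactSupport f) {p : ℝ} (hp : 0 < p) :
    Integrable (fun x => ‖f x‖ ^ p) μ :=
  (hf.norm.rpow_const fun _ => Or.inr hp.le).integrable_of_hasCompactSupport
    (hcf.comp_left (g := fun z => ‖z‖ ^ p) (by simp [hp.ne']))

lemma lintegral_enorm_rpow {E F : Type*} [NormedAddCommGroup F] [TopologicalSpace E]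
    [MeasurableSpace E] [OpensMeasurableSpace E] {μ : Measure E}
    [IsFiniteMeasureOnCompacts μ] {f : E → F}
    (hf : Continuous f) (hcf : HasCompactSupport f) {p : ℝ} (hp : 0 < p) :
    ∫⁻ x, ‖f x‖ₑ ^ p ∂μ = ENNReal.ofReal (∫ x, ‖f x‖ ^ p ∂μ) := by
  simp_rw [enorm_rpow_eq_ofReal hp.le]
  rw [ofReal_integral_eq_lintegral_ofReal (integrable_norm_rpow hf hcf hp)
    (Eventually.of_forall fun x => by positivity)]

lemma setLIntegral_unitCube_le_iSup {N : ℕ} {u : EuclideanSpace ℝ (Fin N) → ℝ}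
    (hu : Continuous u) (hcu : HasCompactSupport u) {p : ℝ} (hp : 0 < p) (y : Fin N → ℤ) :
    ∫⁻ x in unitCube y, ‖u x‖ₑ ^ p ≤
      ENNReal.ofReal (⨆ z : Fin N → ℤ, ∫ x in unitCube z, |u x| ^ p) := by
  rw [lintegral_enorm_rpow hu hcu hp]
  refine ENNReal.ofReal_le_ofReal ?_
  refine le_ciSup (f := fun z : Fin N → ℤ => ∫ x in unitCube z, |u x| ^ p)
    ⟨∫ x, |u x| ^ p, ?_⟩ y
  rintro _ ⟨z, rfl⟩
  exact setIntegral_le_integral (integrable_norm_rpow hu hcu hp)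
    (Eventually.of_forall fun x => by positivity)

end UnitCubeSobolev

open UnitCubeSobolev

/-- If `(u_k)` is bounded in `Ḣ^{1,p}(ℝ^N)` and the `L^p` masses on unit cubes go to zero
uniformly, then `∫ χ(|u_k|)^{p^*} → 0`. -/
theorem chi_truncation_vanishes (N : ℕ) (p : ℝ) (hp1 : 1 < p) (hpN : p < N)
    (χ : ℝ → ℝ) (hχ : ContDiff ℝ (⊤ : ℕ∞) χ)
    (hχsupp : ∀ t, χ t ≠ 0 → t ∈ Ioo (1/2 : ℝ) 4)
    (hχbd : ∀ t, χ t ∈ Icc (0 : ℝ) 3)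
    (hχ' : ∀ t, |deriv χ t| ≤ 2)
    (u : ℕ → EuclideanSpace ℝ (Fin N) → ℝ)
    (hsmooth : ∀ k, ContDiff ℝ (⊤ : ℕ∞) (u k)) (hcs : ∀ k, HasCompactSupport (u k))
    (M : ℝ) (hbdd : ∀ k, ∫ x, ‖fderiv ℝ (u k) x‖ ^ p ≤ M)
    (hcubes : Tendsto (fun k => ⨆ y : Fin N → ℤ,
        ∫ x in {x : EuclideanSpace ℝ (Fin N) |
          ∀ i, (y i : ℝ) < x i ∧ x i < (y i : ℝ) + 1}, |u k x| ^ p)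
      atTop (𝓝 0)) :
    Tendsto (fun k => ∫ x, χ |u k x| ^ ((N : ℝ) * p / ((N : ℝ) - p))) atTop (𝓝 0) := by
  have hp0 : 0 < p := by linarith
  have hN0 : (0 : ℝ) < N := by linarith
  have hNp : 0 < (N : ℝ) - p := by linarith
  set q : ℝ := (N : ℝ) * p / ((N : ℝ) - p)
  have hq0 : 0 < q := by positivity
  have hpq : q⁻¹ = p⁻¹ - (N : ℝ)⁻¹ := by
    simp only [q]
    field_simp
  have hlt : p < q := by
    rw [← inv_lt_inv₀ hq0 hp0, hpq]
    linarith [inv_pos.2 hN0]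
  have hθ : 0 < 1 - p / q := by
    linarith [(div_lt_one hq0).2 hlt]
  have hN : 0 < N := by exact_mod_cast hN0
  obtain ⟨C, hC, hcube⟩ := exists_lintegral_rpow_le_of_unitCube_le hp1.le hN hlt.le hpq
  obtain ⟨D, hD, hsob⟩ := exists_lintegral_rpow_le_lintegral_fderiv hp1.le hN hq0 hpq
  have hu1 (k) : ContDiff ℝ 1 (u k) := (hsmooth k).of_le (by simp)
  have hχ1 : ContDiff ℝ 1 χ := hχ.of_le (by simp)
  have hw := contDiff_comp_abs hχ1 hχsupp
  have hv (k) : ContDiff ℝ 1 (fun x => χ |u k x|) := hw.comp (hu1 k)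
  have hχ0 : χ |0| = 0 := by
    by_contra h
    have := (hχsupp _ h).1
    norm_num at this
  have hcv (k) : HasCompactSupport (fun x => χ |u k x|) :=
    (hcs k).comp_left (g := fun t => χ |t|) hχ0
  set a : ℕ → ℝ := fun k => ⨆ y : Fin N → ℤ, ∫ x in unitCube y, |u k x| ^ p
  have ha : Tendsto a atTop (𝓝 0) := hcubes
  set A : ℝ≥0∞ := 3 ^ q * 2 ^ p
  have hA : A ≠ ∞ := ENNReal.mul_ne_top (by simp) (by simp)
  have hmass (k) (y) : ∫⁻ x in unitCube y, ‖χ |u k x|‖ₑ ^ q ≤ A * ENNReal.ofReal (a k) := by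
    calc ∫⁻ x in unitCube y, ‖χ |u k x|‖ₑ ^ q ≤ ∫⁻ x in unitCube y, A * ‖u k x‖ₑ ^ p :=
          lintegral_mono fun x => enorm_comp_abs_rpow_le hχsupp hχbd hq0 hp0 _
      _ = A * ∫⁻ x in unitCube y, ‖u k x‖ₑ ^ p := lintegral_const_mul' _ _ hA
      _ ≤ _ := by
          gcongr
          exact setLIntegral_unitCube_le_iSup (hu1 k).continuous (hcs k) hp0 y
  have hgrad (k) : ∫⁻ x, ‖fderiv ℝ (u k) x‖ₑ ^ p ≤ ENNReal.ofReal M := by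
    rw [lintegral_enorm_rpow ((hu1 k).continuous_fderiv one_ne_zero) ((hcs k).fderiv ℝ) hp0]
    exact ENNReal.ofReal_le_ofReal (hbdd k)
  have hcrit (k) : ∫⁻ x, ‖u k x‖ₑ ^ q ≤ (D * ENNReal.ofReal M) ^ (q / p) := by
    have h1 := (hsob (u k) (hu1 k) (hcs k)).trans (mul_le_mul_right (hgrad k) D)
    have h2 := ENNReal.rpow_le_rpow h1 (div_pos hq0 hp0).le
    rwa [← ENNReal.rpow_mul, div_mul_div_cancel₀' hp0.ne', div_self hq0.ne',
      ENNReal.rpow_one] at h2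
  set B : ℝ≥0∞ := 4 ^ p * ENNReal.ofReal M + 3 ^ p * 2 ^ q * (D * ENNReal.ofReal M) ^ (q / p)
  have hB : B ≠ ∞ := by
    refine ENNReal.add_ne_top.2 ⟨ENNReal.mul_ne_top (by simp) ENNReal.ofReal_ne_top,
      ENNReal.mul_ne_top (ENNReal.mul_ne_top (by simp) (by simp)) ?_⟩
    exact ENNReal.rpow_ne_top_of_nonneg (by positivity)
      (ENNReal.mul_ne_top hD ENNReal.ofReal_ne_top)
  have hnorm (k) :
      ∫⁻ x, (‖fderiv ℝ (fun x => χ |u k x|) x‖ₑ ^ p + ‖χ |u k x|‖ₑ ^ p) ≤ B := by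
    have h1 := (hu1 k).continuous_fderiv one_ne_zero
    have h2 := (hu1 k).continuous
    calc ∫⁻ x, (‖fderiv ℝ (fun x => χ |u k x|) x‖ₑ ^ p + ‖χ |u k x|‖ₑ ^ p)
        ≤ ∫⁻ x, (4 ^ p * ‖fderiv ℝ (u k) x‖ₑ ^ p + 3 ^ p * 2 ^ q * ‖u k x‖ₑ ^ q) := by
          refine lintegral_mono fun x => add_le_add ?_
            (enorm_comp_abs_rpow_le hχsupp hχbd hp0 hq0 _)
          rw [← ENNReal.mul_rpow_of_nonneg _ _ hp0.le]
          exact ENNReal.rpow_le_rpow (enorm_fderiv_comp_le (hw.differentiable one_ne_zero)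
            ((hu1 k).differentiable one_ne_zero)
            (abs_deriv_comp_abs_le hχ1 hχsupp hχ') x) hp0.le
      _ = 4 ^ p * (∫⁻ x, ‖fderiv ℝ (u k) x‖ₑ ^ p) + 3 ^ p * 2 ^ q * ∫⁻ x, ‖u k x‖ₑ ^ q := by
          rw [lintegral_add_left (by fun_prop), lintegral_const_mul _ (by fun_prop),
            lintegral_const_mul _ (by fun_prop)]
      _ ≤ B := add_le_add (mul_le_mul_right (hgrad k) _) (mul_le_mul_right (hcrit k) _)
  have hbound (k) : ∫⁻ x, ‖χ |u k x|‖ₑ ^ q ≤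
      C * (A * ENNReal.ofReal (a k)) ^ (1 - p / q) * B :=
    (hcube _ (hv k) (hcv k) _ (hmass k)).trans (mul_le_mul_right (hnorm k) _)
  have hlim : Tendsto (fun k => C * (A * ENNReal.ofReal (a k)) ^ (1 - p / q) * B) atTop (𝓝 0) := by
    have h1 : Tendsto (fun k => A * ENNReal.ofReal (a k)) atTop (𝓝 0) := by
      simpa using ENNReal.Tendsto.const_mul (ENNReal.tendsto_ofReal ha) (Or.inr hA)
    have h2 : Tendsto (fun k => (A * ENNReal.ofReal (a k)) ^ (1 - p / q)) atTop (𝓝 0) := by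
      simpa [ENNReal.zero_rpow_of_pos hθ] using h1.ennrpow_const (1 - p / q)
    simpa using ENNReal.Tendsto.mul_const
      (ENNReal.Tendsto.const_mul h2 (Or.inr hC)) (Or.inr hB)
  have hzero := tendsto_of_tendsto_of_tendsto_of_le_of_le tendsto_const_nhds hlim
    (fun _ => zero_le) hbound
  have hreal := (ENNReal.tendsto_toReal ENNReal.zero_ne_top).comp hzero
  rw [ENNReal.toReal_zero] at hreal
  refine hreal.congr fun k => ?_
  rw [Function.comp_apply, lintegral_enorm_rpow (hv k).continuous (hcv k) hq0,
    ENNReal.toReal_ofReal (integral_nonneg fun x => by positivity)]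
  simp_rw [Real.norm_of_nonneg (hχbd _).1]
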